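/- Over the two-letter alphabet {a, b}, the language a* ∪ b* is recognized by some one-way reversible automaton with multiple initial states (MRFA) having two initial states, but is not recognized by any sweeping reversible automaton (sRFA). -/

import Mathlib

open scoped Classical

/-- Run a partial transition function along a word. -/
def runP {A Q : Type} (d : A → Q → Option Q) (q : Q) (w : List A) : Option Q :=
  w.foldl (fun o a => o.bind (d a)) (some q)

/-- One-way reversible finite automaton (1RFA): a partial deterministic automaton
with a single initial state and injective transition functions. -/
structure RFA (A Q : Type) where
  start : Q
  next : A → Q → Option Q
  inj : ∀ a q q' r, next a q = some r → next a q' = some r → q = q'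
  accept : Set Q

def RFA.Language {A Q : Type} (M : RFA A Q) : Set (List A) :=
  {w | ∃ qf ∈ M.accept, runP M.next M.start w = some qf}

/-- A permutation automaton (1PerFA): every transition function is a totally
defined bijection. -/
def RFA.IsPerm {A Q : Type} (M : RFA A Q) : Prop :=
  (∀ a q, (M.next a q).isSome) ∧ ∀ a r, ∃ q, M.next a q = some r

/-- One-way reversible finite automaton with multiple initial states (MRFA). -/
structure MRFA (A Q : Type) where
  init : Set Q
  next : A → Q → Option Q
  inj : ∀ a q q' r, next a q = some r → next a q' = some r → q = q'
  accept : Set Q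

def MRFA.Language {A Q : Type} (M : MRFA A Q) : Set (List A) :=
  {w | ∃ q0 ∈ M.init, ∃ qf ∈ M.accept, runP M.next q0 w = some qf}

def Rec1RFA (A : Type) (L : Set (List A)) : Prop :=
  ∃ (Q : Type) (_ : Fintype Q) (M : RFA A Q), M.Language = L

def Rec1RFA1 (A : Type) (L : Set (List A)) : Prop :=
  ∃ (Q : Type) (_ : Fintype Q) (M : RFA A Q), M.accept.ncard = 1 ∧ M.Language = L

def Rec1PerFA (A : Type) (L : Set (List A)) : Prop :=
  ∃ (Q : Type) (_ : Fintype Q) (M : RFA A Q), M.IsPerm ∧ M.Language = L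

def Rec1PerFA1 (A : Type) (L : Set (List A)) : Prop :=
  ∃ (Q : Type) (_ : Fintype Q) (M : RFA A Q),
    M.IsPerm ∧ M.accept.ncard = 1 ∧ M.Language = L

def RecMRFA (A : Type) (L : Set (List A)) : Prop :=
  ∃ (Q : Type) (_ : Fintype Q) (M : MRFA A Q), M.Language = L

/-- Sweeping reversible automaton (sRFA), given without its accepting set:
states `Qp` move rightwards, states `Qm` move leftwards; `startT` is the
transition of the left end-marker function on the initial state, `turnL` its
restriction to `Qm`, and `turnR` is the transition function at the right
end-marker.  All transition functions are partial and injective, and the left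
end-marker function is injective on the whole of `{q₀} ∪ Q₋`. -/
structure SRFA (A Qp Qm : Type) where
  start : Qp
  nextP : A → Qp → Option Qp
  nextM : A → Qm → Option Qm
  startT : Option Qp
  turnL : Qm → Option Qp
  turnR : Qp → Option Qm
  injP : ∀ a q q' r, nextP a q = some r → nextP a q' = some r → q = q'
  injM : ∀ a q q' r, nextM a q = some r → nextM a q' = some r → q = q'
  injL : ∀ q q' r, turnL q = some r → turnL q' = some r → q = q'
  injR : ∀ q q' r, turnR q = some r → turnR q' = some r → q = q'
  startT_ne_turnL : ∀ q r, startT = some r → turnL q ≠ some r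

/-- One step of a sweeping automaton on input `⊢w⊣`: a configuration is a state
together with a head position in `{0, 1, …, |w| + 1}`, where position `0` is the
left end-marker, position `i` with `1 ≤ i ≤ |w|` carries the `i`-th input
symbol, and position `|w| + 1` is the right end-marker.  The result is `none`
when the corresponding transition is undefined and the computation halts. -/
noncomputable def SRFA.step {A Qp Qm : Type} (M : SRFA A Qp Qm) (w : List A) :
    (Qp ⊕ Qm) × ℕ → Option ((Qp ⊕ Qm) × ℕ)
  | (Sum.inl q, i) =>
      if i = 0 then
        if q = M.start then M.startT.map (fun p => (Sum.inl p, 1)) else none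
      else if i = w.length + 1 then
        (M.turnR q).map (fun r => (Sum.inr r, w.length))
      else
        (w[i - 1]?.bind (fun a => M.nextP a q)).map (fun p => (Sum.inl p, i + 1))
  | (Sum.inr q, i) =>
      if i = 0 then (M.turnL q).map (fun p => (Sum.inl p, 1))
      else if i = w.length + 1 then none
      else (w[i - 1]?.bind (fun a => M.nextM a q)).map (fun r => (Sum.inr r, i - 1))

/-- The configuration reached after `n` steps of the computation on `w`,
starting in the initial state at the left end-marker (or `none` if the
computation has halted before). -/
noncomputable def SRFA.steps {A Qp Qm : Type} (M : SRFA A Qp Qm) (w : List A) :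
    ℕ → Option ((Qp ⊕ Qm) × ℕ)
  | 0 => some (Sum.inl M.start, 0)
  | n + 1 => (M.steps w n).bind (M.step w)

/-- Acceptance of an ordinary sRFA: the computation halts at the right
end-marker in an accepting state `q ∈ F ⊆ Q₊`. -/
def SRFA.AcceptsR {A Qp Qm : Type} (M : SRFA A Qp Qm) (F : Set Qp) (w : List A) : Prop :=
  ∃ n q, M.steps w n = some (Sum.inl q, w.length + 1) ∧ q ∈ F ∧
    M.step w (Sum.inl q, w.length + 1) = none

def SRFA.LangR {A Qp Qm : Type} (M : SRFA A Qp Qm) (F : Set Qp) : Set (List A) :=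
  {w | M.AcceptsR F w}

/-- Acceptance of an sRFA with acceptance at both sides: the computation halts
at either end-marker in an accepting state `c ∈ F ⊆ Q₊ ∪ Q₋`. -/
def SRFA.AcceptsB {A Qp Qm : Type} (M : SRFA A Qp Qm) (F : Set (Qp ⊕ Qm)) (w : List A) : Prop :=
  ∃ n c i, M.steps w n = some (c, i) ∧ c ∈ F ∧ (i = 0 ∨ i = w.length + 1) ∧
    M.step w (c, i) = none

def SRFA.LangB {A Qp Qm : Type} (M : SRFA A Qp Qm) (F : Set (Qp ⊕ Qm)) : Set (List A) :=
  {w | M.AcceptsB F w}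

def RecSRFA (A : Type) (L : Set (List A)) : Prop :=
  ∃ (Qp Qm : Type) (_ : Fintype Qp) (_ : Fintype Qm) (M : SRFA A Qp Qm) (F : Set Qp),
    M.LangR F = L

/-- The language `a* ∪ b*` over the two-letter alphabet `{a, b}` (with
`a = false` and `b = true`). -/
def LaStarbStar : Set (List Bool) :=
  {w | ∀ c ∈ w, c = false} ∪ {w | ∀ c ∈ w, c = true}

theorem exists_pos_pow_isIdempotentElem {S : Type*} [Monoid S] [Finite S] (x : S) :
    ∃ n, 0 < n ∧ IsIdempotentElem (x ^ n) := by
  obtain ⟨i, j, hij, h⟩ := Finite.exists_ne_map_eq_of_infinite (fun n : ℕ => x ^ n)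
  wlog hlt : i < j generalizing i j
  · exact this j i hij.symm h.symm (by omega)
  obtain ⟨d, rfl⟩ := Nat.exists_eq_add_of_lt hlt
  have shift : ∀ k, i ≤ k → x ^ (k + (d + 1)) = x ^ k := by
    intro k hk
    obtain ⟨l, rfl⟩ := Nat.exists_eq_add_of_le hk
    calc x ^ (i + l + (d + 1)) = x ^ (i + d + 1) * x ^ l := by rw [← pow_add]; congr 1; omega
      _ = x ^ (i + l) := by rw [← h, ← pow_add]
  have shift_mul : ∀ m k, i ≤ k → x ^ (k + m * (d + 1)) = x ^ k := by
    intro m k hk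
    induction m with
    | zero => simp
    | succ m ih => rw [Nat.succ_mul, ← add_assoc, shift _ (by omega), ih]
  refine ⟨(i + 1) * (d + 1), by positivity, ?_⟩
  rw [IsIdempotentElem, ← pow_add]
  exact shift_mul _ _ (by nlinarith)

section PartialRuns

variable {A Q : Type}

theorem foldl_bind_none (d : A → Q → Option Q) (w : List A) :
    w.foldl (fun o a => o.bind (d a)) none = none := by
  induction w with
  | nil => rfl
  | cons a w ih => simpa using ih

theorem runP_cons (d : A → Q → Option Q) (q : Q) (a : A) (w : List A) :
    runP d q (a :: w) = (d a q).bind fun r => runP d r w := by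
  cases h : d a q <;> simp [runP, h, foldl_bind_none]

theorem runP_append (d : A → Q → Option Q) (q : Q) (u v : List A) :
    runP d q (u ++ v) = (runP d q u).bind fun r => runP d r v := by
  cases h : runP d q u <;> simp only [runP] at h <;> simp [runP, h, foldl_bind_none]

theorem runP_inj {d : A → Q → Option Q}
    (hd : ∀ a q q' r, d a q = some r → d a q' = some r → q = q') (w : List A) {q q' r : Q}
    (h : runP d q w = some r) (h' : runP d q' w = some r) : q = q' := by
  induction w generalizing q q' with
  | nil => simp_all [runP]
  | cons a w ih =>
    rw [runP_cons, Option.bind_eq_some_iff] at h h'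
    obtain ⟨s, hs, h⟩ := h
    obtain ⟨s', hs', h'⟩ := h'
    obtain rfl := ih h h'
    exact hd a q q' s hs hs'

/-- The action of a letter on `Option Q`, with `none` as a sink. -/
def letterEnd (d : A → Q → Option Q) (a : A) : Function.End (Option Q) :=
  fun o => o.bind (d a)

theorem letterEnd_pow_apply (d : A → Q → Option Q) (a : A) (n : ℕ) (o : Option Q) :
    (letterEnd d a ^ n) o = (List.replicate n a).foldl (fun o a => o.bind (d a)) o := by
  induction n generalizing o with
  | zero => rfl
  | succ n ih =>
    rw [pow_succ, List.replicate_succ, List.foldl_cons, ← ih]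
    rfl

/-- The word acts on states as a restriction of the identity. -/
def ActsAsPartialId (d : A → Q → Option Q) (w : List A) : Prop :=
  ∀ q r, runP d q w = some r → r = q

theorem actsAsPartialId_replicate {d : A → Q → Option Q}
    (hd : ∀ a q q' r, d a q = some r → d a q' = some r → q = q') {a : A} {n : ℕ}
    (h : IsIdempotentElem (letterEnd d a ^ n)) :
    ActsAsPartialId d (List.replicate n a) := by
  intro q r hq
  have hpow : ∀ s, (letterEnd d a ^ n) (some s) = runP d s (List.replicate n a) :=
    fun s => letterEnd_pow_apply d a n (some s)
  have key := congrFun h (some q)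
  change (letterEnd d a ^ n) ((letterEnd d a ^ n) (some q)) = _ at key
  rw [hpow, hq, hpow] at key
  exact runP_inj hd _ key hq

end PartialRuns

namespace SRFA

variable {A Qp Qm : Type} (M : SRFA A Qp Qm)

/-- The configuration `c` occurs in the computation on `w`. -/
def Reaches (w : List A) (c : (Qp ⊕ Qm) × ℕ) : Prop := ∃ n, M.steps w n = some c

variable {M}

theorem Reaches.step {w : List A} {c c' : (Qp ⊕ Qm) × ℕ} (h : M.Reaches w c)
    (hs : M.step w c = some c') : M.Reaches w c' := by
  obtain ⟨n, hn⟩ := h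
  exact ⟨n + 1, by simp [steps, hn, hs]⟩

theorem steps_eq_none_of_halted {w : List A} {c : (Qp ⊕ Qm) × ℕ} {n : ℕ}
    (h : M.steps w n = some c) (hs : M.step w c = none) (k : ℕ) :
    M.steps w (n + k + 1) = none := by
  induction k with
  | zero => simp [steps, h, hs]
  | succ k ih => rw [← add_assoc, steps, ih]; rfl

theorem Reaches.halted_unique {w : List A} {c c' : (Qp ⊕ Qm) × ℕ} (h : M.Reaches w c)
    (h' : M.Reaches w c') (hs : M.step w c = none) (hs' : M.step w c' = none) : c = c' := by
  obtain ⟨n, hn⟩ := h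
  obtain ⟨m, hm⟩ := h'
  rcases lt_trichotomy n m with hlt | rfl | hlt
  · obtain ⟨k, rfl⟩ := Nat.exists_eq_add_of_lt hlt
    simp [steps_eq_none_of_halted hn hs k] at hm
  · simpa [hn] using hm
  · obtain ⟨k, rfl⟩ := Nat.exists_eq_add_of_lt hlt
    simp [steps_eq_none_of_halted hm hs' k] at hn

theorem AcceptsR.position_of_halted {F : Set Qp} {w : List A} {c : (Qp ⊕ Qm) × ℕ}
    (hw : M.AcceptsR F w) (h : M.Reaches w c) (hs : M.step w c = none) :
    c.2 = w.length + 1 := by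
  obtain ⟨n, q, hn, -, hq⟩ := hw
  rw [h.halted_unique ⟨n, hn⟩ hs hq]

theorem step_right (u v : List A) (a : A) (p : Qp) :
    M.step (u ++ a :: v) (Sum.inl p, u.length + 1) =
      (M.nextP a p).map fun q => (Sum.inl q, u.length + 1 + 1) := by
  simp [step]

theorem step_left (u v : List A) (a : A) (r : Qm) :
    M.step (u ++ a :: v) (Sum.inr r, u.length + 1) =
      (M.nextM a r).map fun s => (Sum.inr s, u.length) := by
  simp [step]

theorem step_turnR (w : List A) (p : Qp) :
    M.step w (Sum.inl p, w.length + 1) = (M.turnR p).map fun r => (Sum.inr r, w.length) := by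
  simp [step]

theorem step_turnL (w : List A) (r : Qm) :
    M.step w (Sum.inr r, 0) = (M.turnL r).map fun p => (Sum.inl p, 1) := by
  simp [step]

theorem step_start (w : List A) :
    M.step w (Sum.inl M.start, 0) = M.startT.map fun p => (Sum.inl p, 1) := by
  simp [step]

theorem Reaches.sweep_right {u v : List A} {p q : Qp}
    (h : M.Reaches (u ++ v) (Sum.inl p, u.length + 1)) (hr : runP M.nextP p v = some q) :
    M.Reaches (u ++ v) (Sum.inl q, (u ++ v).length + 1) := by
  induction v generalizing u p with
  | nil => simp_all [runP]
  | cons a v ih =>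
    rw [runP_cons, Option.bind_eq_some_iff] at hr
    obtain ⟨s, hs, hr⟩ := hr
    have h' := h.step (c' := (Sum.inl s, u.length + 1 + 1)) (by simp [step_right, hs])
    simpa using ih (u := u ++ [a]) (p := s) (by simpa using h') hr

theorem Reaches.sweep_left {u v : List A} {r s : Qm}
    (h : M.Reaches (u ++ v) (Sum.inr r, u.length)) (hr : runP M.nextM r u.reverse = some s) :
    M.Reaches (u ++ v) (Sum.inr s, 0) := by
  induction u using List.reverseRecOn generalizing v r with
  | nil => simp_all [runP]
  | append_singleton u a ih =>
    rw [List.reverse_append, List.reverse_singleton, List.singleton_append, runP_cons,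
      Option.bind_eq_some_iff] at hr
    obtain ⟨t, ht, hr⟩ := hr
    simp only [List.append_assoc, List.singleton_append, List.length_append,
      List.length_singleton] at h ⊢
    exact ih (h.step (by simp [step_left, ht])) hr

theorem AcceptsR.exists_sweep_right {F : Set Qp} {u v : List A} {p : Qp}
    (hw : M.AcceptsR F (u ++ v)) (h : M.Reaches (u ++ v) (Sum.inl p, u.length + 1)) :
    ∃ q, runP M.nextP p v = some q := by
  induction v generalizing u p with
  | nil => exact ⟨p, rfl⟩
  | cons a v ih =>
    cases hs : M.nextP a p with
    | none =>
      have := hw.position_of_halted h (by simp [step_right, hs])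
      simp at this
    | some s =>
      have h' := h.step (c' := (Sum.inl s, u.length + 1 + 1)) (by simp [step_right, hs])
      obtain ⟨q, hq⟩ := ih (u := u ++ [a]) (p := s) (by simpa using hw) (by simpa using h')
      exact ⟨q, by simp [runP_cons, hs, hq]⟩

theorem AcceptsR.exists_sweep_left {F : Set Qp} {u v : List A} {r : Qm}
    (hw : M.AcceptsR F (u ++ v)) (h : M.Reaches (u ++ v) (Sum.inr r, u.length)) :
    ∃ s, runP M.nextM r u.reverse = some s := by
  induction u using List.reverseRecOn generalizing v r with
  | nil => exact ⟨r, rfl⟩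
  | append_singleton u a ih =>
    simp only [List.append_assoc, List.singleton_append, List.length_append,
      List.length_singleton] at h hw
    cases hs : M.nextM a r with
    | none =>
      have := hw.position_of_halted h (by simp [step_left, hs])
      simp at this
    | some s =>
      obtain ⟨q, hq⟩ := ih (r := s) hw (h.step (by simp [step_left, hs]))
      exact ⟨q, by simp [runP_cons, hs, hq]⟩

variable (M) in
/-- Sweeping over `w` fixes the state of the configuration. -/
def FixedBy (w : List A) (c : Qp ⊕ Qm) : Prop :=
  c.elim (fun p => runP M.nextP p w = some p) (fun r => runP M.nextM r w.reverse = some r)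

theorem FixedBy.append {u v : List A} {c : Qp ⊕ Qm} (hu : M.FixedBy u c) (hv : M.FixedBy v c) :
    M.FixedBy (u ++ v) c := by
  cases c <;> simp_all [FixedBy, runP_append]

/-- If the states occurring in the computation on the empty word are fixed by sweeps over `w`
whenever they are entered on `w`, then the computation on `w` follows the one on the empty word. -/
theorem reaches_of_steps_nil {w : List A}
    (hright : ∀ p, M.Reaches [] (Sum.inl p, 1) → M.Reaches w (Sum.inl p, 1) →
      M.FixedBy w (Sum.inl p))
    (hleft : ∀ r, M.Reaches [] (Sum.inr r, 0) → M.Reaches w (Sum.inr r, w.length) →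
      M.FixedBy w (Sum.inr r))
    {n : ℕ} {c : (Qp ⊕ Qm) × ℕ} (hn : M.steps [] n = some c) :
    c = (Sum.inl M.start, 0) ∧ M.Reaches w c ∨
    (∃ p, c = (Sum.inl p, 1) ∧ M.FixedBy w (Sum.inl p) ∧
      M.Reaches w (Sum.inl p, w.length + 1)) ∨
    ∃ r, c = (Sum.inr r, 0) ∧ M.FixedBy w (Sum.inr r) ∧ M.Reaches w (Sum.inr r, 0) := by
  induction n generalizing c with
  | zero =>
    obtain rfl : (Sum.inl M.start, 0) = c := by simpa [steps] using hn
    exact Or.inl ⟨rfl, 0, rfl⟩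
  | succ n ih =>
    have hc : M.Reaches [] c := ⟨_, hn⟩
    rw [steps, Option.bind_eq_some_iff] at hn
    obtain ⟨c', hc', hs⟩ := hn
    have enterRight : ∀ p, c = (Sum.inl p, 1) → M.Reaches w (Sum.inl p, 1) →
        M.FixedBy w (Sum.inl p) ∧ M.Reaches w (Sum.inl p, w.length + 1) := by
      rintro p rfl h
      have hp := hright p hc h
      exact ⟨hp, Reaches.sweep_right (u := []) h hp⟩
    rcases ih hc' with ⟨rfl, h⟩ | ⟨p, rfl, -, h⟩ | ⟨r, rfl, -, h⟩
    · rw [step_start, Option.map_eq_some_iff] at hs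
      obtain ⟨p, hp, rfl⟩ := hs
      exact Or.inr (Or.inl ⟨p, rfl, enterRight p rfl (h.step (by simp [step_start, hp]))⟩)
    · rw [show (1 : ℕ) = ([] : List A).length + 1 from rfl, step_turnR,
        Option.map_eq_some_iff] at hs
      obtain ⟨r, hr, rfl⟩ := hs
      have h' := h.step (c' := (Sum.inr r, w.length)) (by simp [step_turnR, hr])
      have hfix := hleft r hc h'
      exact Or.inr (Or.inr ⟨r, rfl, hfix,
        by simpa using Reaches.sweep_left (v := []) (by simpa using h') hfix⟩)
    · rw [step_turnL, Option.map_eq_some_iff] at hs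
      obtain ⟨p, hp, rfl⟩ := hs
      exact Or.inr (Or.inl ⟨p, rfl, enterRight p rfl (h.step (by simp [step_turnL, hp]))⟩)

theorem AcceptsR.of_nil {F : Set Qp} {w : List A} (h : M.AcceptsR F [])
    (hright : ∀ p, M.Reaches [] (Sum.inl p, 1) → M.FixedBy w (Sum.inl p))
    (hleft : ∀ r, M.Reaches [] (Sum.inr r, 0) → M.FixedBy w (Sum.inr r)) :
    M.AcceptsR F w := by
  obtain ⟨n, q, hn, hq, hs⟩ := h
  rcases reaches_of_steps_nil (fun p hp _ => hright p hp) (fun r hr _ => hleft r hr) hn with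
    ⟨hc, -⟩ | ⟨p, hc, -, m, hm⟩ | ⟨r, hc, -, -⟩
  · simp at hc
  · obtain rfl : q = p := by simpa using hc
    refine ⟨m, q, hm, hq, ?_⟩
    rw [step_turnR, Option.map_eq_none_iff] at hs ⊢
    exact hs
  · simp at hc

/-- On an accepted word acting by partial identities, every sweep fixes its state. -/
theorem AcceptsR.fixedBy {F : Set Qp} {w : List A} (hw : M.AcceptsR F w)
    (hP : ActsAsPartialId M.nextP w) (hM : ActsAsPartialId M.nextM w.reverse) :
    (∀ p, M.Reaches [] (Sum.inl p, 1) → M.FixedBy w (Sum.inl p)) ∧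
    ∀ r, M.Reaches [] (Sum.inr r, 0) → M.FixedBy w (Sum.inr r) := by
  have follow : ∀ {n c}, M.steps [] n = some c → _ := reaches_of_steps_nil (M := M) (w := w)
    (fun p _ h => by
      obtain ⟨q, hq⟩ := AcceptsR.exists_sweep_right (u := []) hw h
      obtain rfl := hP p q hq
      exact hq)
    (fun r _ h => by
      obtain ⟨s, hs⟩ := AcceptsR.exists_sweep_left (F := F) (u := w) (v := []) (r := r)
        (by simpa using hw) (by simpa using h)
      obtain rfl := hM r s hs
      exact hs)
  constructor
  · rintro p ⟨n, hn⟩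
    rcases follow hn with ⟨hc, -⟩ | ⟨p', hc, hfix, -⟩ | ⟨r, hc, -, -⟩
    · simp at hc
    · obtain rfl : p = p' := by simpa using hc
      exact hfix
    · simp at hc
  · rintro r ⟨n, hn⟩
    rcases follow hn with ⟨hc, -⟩ | ⟨p, hc, -, -⟩ | ⟨r', hc, hfix, -⟩
    · simp at hc
    · simp at hc
    · obtain rfl : r = r' := by simpa using hc
      exact hfix

theorem AcceptsR.append {F : Set Qp} {u v : List A} (h : M.AcceptsR F [])
    (hu : M.AcceptsR F u) (hv : M.AcceptsR F v)
    (huP : ActsAsPartialId M.nextP u) (huM : ActsAsPartialId M.nextM u.reverse)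
    (hvP : ActsAsPartialId M.nextP v) (hvM : ActsAsPartialId M.nextM v.reverse) :
    M.AcceptsR F (u ++ v) :=
  have fu := hu.fixedBy huP huM
  have fv := hv.fixedBy hvP hvM
  h.of_nil (fun p hp => (fu.1 p hp).append (fv.1 p hp))
    (fun r hr => (fu.2 r hr).append (fv.2 r hr))

variable (M) in
/-- Some positive power of each letter acts by partial identities in both directions. -/
theorem exists_pos_actsAsPartialId_replicate [Finite A] [Finite Qp] [Finite Qm] :
    ∃ n, 0 < n ∧ ∀ a, ActsAsPartialId M.nextP (List.replicate n a) ∧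
      ActsAsPartialId M.nextM (List.replicate n a).reverse := by
  have : Finite (Function.End (Option Qp)) := inferInstanceAs (Finite (Option Qp → Option Qp))
  have : Finite (Function.End (Option Qm)) := inferInstanceAs (Finite (Option Qm → Option Qm))
  obtain ⟨n, hn, h⟩ := exists_pos_pow_isIdempotentElem (letterEnd M.nextP, letterEnd M.nextM)
  refine ⟨n, hn, fun a => ⟨?_, ?_⟩⟩
  · exact actsAsPartialId_replicate M.injP (congrFun (congrArg Prod.fst h) a)
  · rw [List.reverse_replicate]
    exact actsAsPartialId_replicate M.injM (congrFun (congrArg Prod.snd h) a)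

end SRFA

theorem not_recSRFA_LaStarbStar : ¬ RecSRFA Bool LaStarbStar := by
  rintro ⟨Qp, Qm, _, _, M, F, hL⟩
  have accepts : ∀ w, M.AcceptsR F w ↔ w ∈ LaStarbStar := fun w => hL ▸ Iff.rfl
  obtain ⟨n, hn, hid⟩ := M.exists_pos_actsAsPartialId_replicate
  have h : M.AcceptsR F (List.replicate n false ++ List.replicate n true) :=
    SRFA.AcceptsR.append ((accepts _).2 (by simp [LaStarbStar]))
      ((accepts _).2 (Or.inl fun c hc => List.eq_of_mem_replicate hc))
      ((accepts _).2 (Or.inr fun c hc => List.eq_of_mem_replicate hc))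
      (hid _).1 (hid _).2 (hid _).1 (hid _).2
  rcases (accepts _).1 h with h | h
  · simpa using h true (by simp [hn.ne'])
  · simpa using h false (by simp [hn.ne'])

/-- The automaton with one state per letter, each state looping on its own letter only. -/
noncomputable def loopMRFA : MRFA Bool Bool where
  init := Set.univ
  next a q := if a = q then some q else none
  inj := by
    intro a q q' r h h'
    split_ifs at h h'
    simp_all
  accept := Set.univ

theorem runP_loopMRFA (q r : Bool) (w : List Bool) :
    runP loopMRFA.next q w = some r ↔ (∀ c ∈ w, c = q) ∧ q = r := by
  induction w with
  | nil => simp [runP]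
  | cons a w ih =>
    rw [runP_cons]
    by_cases h : a = q
    · subst h
      simpa [loopMRFA] using ih
    · simp [loopMRFA, h]

theorem loopMRFA_language : loopMRFA.Language = LaStarbStar := by
  ext w
  simp only [MRFA.Language, Set.mem_ofPred_eq, runP_loopMRFA]
  simp [loopMRFA, LaStarbStar]

/-- `a* ∪ b*` is recognized by some MRFA with two initial states,
but by no sRFA. -/
theorem stmt11 :
    (∃ (Q : Type) (_ : Fintype Q) (M : MRFA Bool Q),
      M.init.ncard = 2 ∧ M.Language = LaStarbStar) ∧
    ¬ RecSRFA Bool LaStarbStar := by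
  exact ⟨⟨Bool, inferInstance, loopMRFA, by simp [loopMRFA], loopMRFA_language⟩,
    not_recSRFA_LaStarbStar⟩
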